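/- Let D be a division ring that is weakly locally finite and algebraic over its center, and let n ≥ 1. If the group GL_n(D) is finitely generated, then D is commutative (i.e., D is a field). -/

import Mathlib

/-- A division ring is *centrally finite* if it is a finite-dimensional
vector space over its own center. -/
def IsCentrallyFinite (E : Type*) [DivisionRing E] : Prop :=
  Module.Finite (Subring.center E) E

/-- A division ring is *weakly locally finite* if for every finite subset `S`,
the division subring generated by `S` is centrally finite. -/
def IsWeaklyLocallyFinite (D : Type*) [DivisionRing D] : Prop :=
  ∀ S : Finset D, IsCentrallyFinite (Subfield.closure (S : Set D))

/-- A division ring is *algebraic over its center* if every element is a root of a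
nonzero polynomial all of whose coefficients lie in the center. -/
def IsAlgebraicOverCenter (D : Type*) [DivisionRing D] : Prop :=
  ∀ x : D, ∃ p : Polynomial D, p ≠ 0 ∧ (∀ i, p.coeff i ∈ Subring.center D) ∧ p.eval x = 0

/-!
If `GL_n(D)` is finitely generated, the entries of its generators and of their inverses generate
`D` as a ring, because every nonzero element of `D` is an entry of an invertible scalar matrix.
Weak local finiteness then makes `D` a finite module over its center, so by the Artin–Tate lemma
the center is a field that is finitely generated as a ring. As `ℤ` is a Jacobson ring, such a field
is finite; hence `D` is finite, and commutative by Wedderburn's little theorem.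
-/

theorem isJacobsonRing_of_jacobson_bot_eq_bot {R : Type*} [CommRing R] [Ring.DimensionLEOne R]
    (h : (⊥ : Ideal R).jacobson = ⊥) : IsJacobsonRing R := by
  refine isJacobsonRing_iff_prime_eq.mpr fun P hP ↦ ?_
  obtain rfl | hP₀ := eq_or_ne P ⊥
  · exact h
  · have : P.IsMaximal := hP.isMaximal hP₀
    exact Ideal.jacobson_eq_self_of_isMaximal

theorem jacobson_bot_int : (⊥ : Ideal ℤ).jacobson = ⊥ := by
  refine le_antisymm (fun x hx ↦ ?_) Ideal.le_jacobson
  have hunit : IsUnit (x * x + 1) := Ideal.mem_jacobson_bot.mp hx x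
  have hsq : x * x = 0 := by
    have := mul_self_nonneg x
    have := Int.isUnit_iff.mp hunit
    lia
  exact mul_self_eq_zero.mp hsq

instance isJacobsonRing_int : IsJacobsonRing ℤ :=
  isJacobsonRing_of_jacobson_bot_eq_bot jacobson_bot_int

theorem ringChar_ne_zero_of_module_finite_int (F : Type*) [Field F] [Module.Finite ℤ F] :
    ringChar F ≠ 0 := by
  intro h
  have : CharZero F := (CharP.ringChar_zero_iff_CharZero F).mp h
  exact Int.not_isField <|
    isField_of_isIntegral_of_isField (algebraMap ℤ F).injective_int (Field.toIsField F)

theorem finite_of_finiteType_int (F : Type*) [Field F] [Algebra.FiniteType ℤ F] : Finite F := by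
  have : Module.Finite ℤ F := finite_of_finite_type_of_isJacobsonRing ℤ F
  have hchar : (ringChar F : ℤ) ≠ 0 := mod_cast ringChar_ne_zero_of_module_finite_int F
  refine Module.finite_of_fg_torsion F fun {x} ↦
    ⟨⟨ringChar F, mem_nonZeroDivisors_of_ne_zero hchar⟩, ?_⟩
  simp [Submonoid.smul_def]

-- Mathlib's Artin–Tate lemma `fg_of_fg_of_fg` requires `C` to be commutative.
theorem finiteType_of_finiteType_of_module_finite (A B C : Type*) [CommRing A] [CommRing B]
    [Ring C] [Algebra A B] [Algebra B C] [Algebra A C] [IsScalarTower A B C] [IsNoetherianRing A]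
    [hAC : Algebra.FiniteType A C] [hBC : Module.Finite B C] [FaithfulSMul B C] :
    Algebra.FiniteType A B := by
  obtain ⟨B₀, hAB₀, hB₀C⟩ := exists_subalgebra_of_fg A B C hAC.out hBC.fg_top
  have : IsNoetherianRing B₀ := isNoetherianRing_of_fg hAB₀
  have : Module.Finite B₀ C := ⟨hB₀C⟩
  have : Module.Finite B₀ B :=
    .of_injective (IsScalarTower.toAlgHom B₀ B C).toLinearMap
      (FaithfulSMul.algebraMap_injective B C)
  have : Algebra.FiniteType A B₀ := B₀.fg_iff_finiteType.mp hAB₀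
  exact .trans this inferInstance

theorem finite_of_finiteType_int_of_module_finite (K A : Type*) [Field K] [Ring A] [Algebra K A]
    [Module.Finite K A] [Algebra.FiniteType ℤ A] : Finite A := by
  cases subsingleton_or_nontrivial A
  · infer_instance
  · have : Algebra.FiniteType ℤ K := finiteType_of_finiteType_of_module_finite ℤ K A
    have : Finite K := finite_of_finiteType_int K
    exact Module.finite_of_finite K

theorem exists_subalgebra_fg_forall_mem_matrix (R : Type*) {A M ι : Type*} [CommSemiring R]
    [Semiring A] [Algebra R A] [Monoid M] [Monoid.FG M] [Fintype ι] [DecidableEq ι]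
    (f : M →* Matrix ι ι A) : ∃ S : Subalgebra R A, S.FG ∧ ∀ m, f m ∈ S.matrix := by
  obtain ⟨T, hT, hTfin⟩ := Monoid.fg_iff.mp ‹Monoid.FG M›
  let entries : Set A := ⋃ m ∈ T, ⋃ i, Set.range (f m i)
  have hentries : entries.Finite :=
    hTfin.biUnion fun m _ ↦ Set.finite_iUnion fun i ↦ Set.finite_range (f m i)
  refine ⟨Algebra.adjoin R entries, Subalgebra.fg_def.mpr ⟨entries, hentries, rfl⟩, ?_⟩
  have hgen : Submonoid.closure T ≤
      (Algebra.adjoin R entries).matrix.toSubmonoid.comap f := by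
    refine Submonoid.closure_le.mpr fun m hm i j ↦ Algebra.subset_adjoin ?_
    exact Set.mem_biUnion hm <| Set.mem_iUnion_of_mem i <| Set.mem_range_self j
  exact fun m ↦ hgen (hT ▸ Submonoid.mem_top m)

theorem finiteType_of_GL_fg (R D ι : Type*) [CommSemiring R] [DivisionRing D] [Algebra R D]
    [Fintype ι] [DecidableEq ι] [Nonempty ι] [Group.FG (Matrix ι ι D)ˣ] :
    Algebra.FiniteType R D := by
  obtain ⟨S, hS, hmem⟩ := exists_subalgebra_fg_forall_mem_matrix R (Units.coeHom (Matrix ι ι D))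
  suffices S = ⊤ from ⟨this ▸ hS⟩
  refine eq_top_iff.mpr fun a _ ↦ ?_
  obtain rfl | ha := eq_or_ne a 0
  · exact zero_mem S
  · let i : ι := Classical.arbitrary ι
    simpa using hmem (Units.map (Matrix.scalar ι).toMonoidHom (Units.mk0 a ha)) i i

theorem subfield_closure_eq_top_of_adjoin_int {D : Type*} [DivisionRing D] {S : Set D}
    (hS : Algebra.adjoin ℤ S = ⊤) : Subfield.closure S = ⊤ := by
  have hle : Algebra.adjoin ℤ S ≤ subalgebraOfSubring (Subfield.closure S).toSubring :=
    Algebra.adjoin_le Subfield.subset_closure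
  exact eq_top_iff.mpr fun x _ ↦ hle (hS ▸ Algebra.mem_top)

theorem IsWeaklyLocallyFinite.finite_of_finiteType_int {D : Type*} [DivisionRing D]
    (hD : IsWeaklyLocallyFinite D) [hfin : Algebra.FiniteType ℤ D] : Finite D := by
  obtain ⟨S, hS⟩ := hfin.out
  have hcf : IsCentrallyFinite (⊤ : Subfield D) := subfield_closure_eq_top_of_adjoin_int hS ▸ hD S
  let e : D ≃+* (⊤ : Subfield D) := Subfield.topEquiv.symm
  have : Algebra.FiniteType ℤ (⊤ : Subfield D) :=
    .of_surjective (e : D →+* (⊤ : Subfield D)).toIntAlgHom e.surjective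
  have : Module.Finite (Subring.center (⊤ : Subfield D)) (⊤ : Subfield D) := hcf
  have : Finite (⊤ : Subfield D) :=
    finite_of_finiteType_int_of_module_finite (Subring.center (⊤ : Subfield D)) _
  exact .of_equiv _ e.symm.toEquiv

theorem commutative_of_GL_fg_general (D ι : Type*) [DivisionRing D] [Fintype ι] [DecidableEq ι]
    [Nonempty ι] (hD : IsWeaklyLocallyFinite D) (hfg : Group.FG (Matrix ι ι D)ˣ) :
    Finite D ∧ IsField D := by
  have : Algebra.FiniteType ℤ D := finiteType_of_GL_fg ℤ D ι
  have : Finite D := hD.finite_of_finiteType_int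
  exact ⟨this, Finite.isDomain_to_isField D⟩

/-- If `D` is a weakly locally finite division ring, algebraic over its center, and
`GL_n(D)` is finitely generated for some `n ≥ 1`, then `D` is commutative. -/
theorem commutative_of_GL_fg (D : Type*) [DivisionRing D]
    (hwlf : IsWeaklyLocallyFinite D) (halg : IsAlgebraicOverCenter D)
    (n : ℕ) (hn : 1 ≤ n) (hfg : Group.FG (Matrix (Fin n) (Fin n) D)ˣ) :
    ∀ a b : D, a * b = b * a := by
  have : Nonempty (Fin n) := ⟨⟨0, hn⟩⟩
  exact (commutative_of_GL_fg_general D (Fin n) hwlf hfg).2.mul_comm
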